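/- Let (α, μ) be a measure space, let m ≥ 1 be a natural number, and set p = 2m. Then the map f ↦ ‖f‖_{L^p}^p from Lp(μ; ℝ) to ℝ, sending f to the p-th power of its L^p norm, is infinitely Fréchet differentiable (of class C^∞). -/

import Mathlib

open MeasureTheory ENNReal

/-!
By Hölder's inequality, `(g, f) ↦ g * f` is a bounded bilinear map from `L^{p/k} × Lᵖ` to
`L^{p/(k+1)}`, so the powers `f ↦ f ^ k` from `Lᵖ` to `L^{p/k}` are smooth, and so is
`g ↦ ∫ g ^ N` on `L^N`. In an inner product space `‖v‖ ^ (2 * m) = ⟪v, v⟫ ^ m`, and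
`f ↦ ⟪f, f⟫` is a bounded quadratic map from `L^{2m}` to `L^m`.
-/

theorem holderTriple_div_natCast (p : ℝ≥0∞) (k : ℕ) :
    HolderTriple (p / k) p (p / (k + 1 : ℕ)) where
  inv_add_inv_eq_inv := by
    rcases eq_or_ne p 0 with rfl | hp
    · simp
    · rw [ENNReal.inv_div (.inl (natCast_ne_top _)) (.inr hp),
        ENNReal.inv_div (.inl (natCast_ne_top _)) (.inr hp), ← one_div, ENNReal.div_add_div_same,
        Nat.cast_succ]

theorem holderTriple_two_mul (p : ℝ≥0∞) : HolderTriple (2 * p) (2 * p) p where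
  inv_add_inv_eq_inv := by
    rw [ENNReal.mul_inv (.inl two_ne_zero) (.inl ofNat_ne_top), ← add_mul,
      ENNReal.inv_two_add_inv_two, one_mul]

section Power

variable {α A : Type*} [MeasurableSpace α] {μ : Measure α} [NormedRing A] {p : ℝ≥0∞}

theorem memLp_pow {f : α → A} (hf : MemLp f p μ) (k : ℕ) :
    MemLp (fun x => f x ^ k) (p / k) μ := by
  induction k with
  | zero =>
    rcases eq_or_ne p 0 with rfl | hp
    · simpa using aestronglyMeasurable_const
    · simpa [ENNReal.div_zero hp] using memLp_top_const (1 : A)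
  | succ k ih =>
    have := holderTriple_div_natCast p k
    simpa only [pow_succ] using hf.mul' ih

/-- The pointwise power `f ^ k` of `f ∈ Lᵖ`, as an element of `L^{p/k}`. For `k = 0` and `p ≠ 0`
this is the constant function `1` in `L^∞`. -/
noncomputable def lpPow (k : ℕ) (f : Lp A p μ) : Lp A (p / k) μ :=
  (memLp_pow (Lp.memLp f) k).toLp

theorem coeFn_lpPow (k : ℕ) (f : Lp A p μ) : lpPow k f =ᵐ[μ] fun x => f x ^ k :=
  MemLp.coeFn_toLp _

variable (𝕜 : Type*) [NontriviallyNormedField 𝕜] [NormedAlgebra 𝕜 A]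

theorem lpPow_succ (k : ℕ) (f : Lp A p μ) :
    haveI := holderTriple_div_natCast p k
    lpPow (k + 1) f = (ContinuousLinearMap.mul 𝕜 A).holder (p / (k + 1 : ℕ)) (lpPow k f) f := by
  have := holderTriple_div_natCast p k
  refine Lp.ext ?_
  filter_upwards [coeFn_lpPow (k + 1) f, coeFn_lpPow k f,
    (ContinuousLinearMap.mul 𝕜 A).coeFn_holder (r := p / (k + 1 : ℕ)) (lpPow k f) f]
    with x hsucc hk hmul
  rw [hsucc, hmul, hk, ContinuousLinearMap.mul_apply', pow_succ]

theorem contDiff_lpPow [Fact (1 ≤ p)] (k : ℕ) [hpk : Fact (1 ≤ p / k)] {n : WithTop ℕ∞} :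
    ContDiff 𝕜 n (lpPow k : Lp A p μ → Lp A (p / k) μ) := by
  induction k generalizing hpk with
  | zero =>
    have hconst : (lpPow 0 : Lp A p μ → Lp A (p / (0 : ℕ)) μ) = fun _ => lpPow 0 0 := by
      funext f
      simp only [lpPow, pow_zero]
    exact hconst ▸ contDiff_const
  | succ k ih =>
    have := holderTriple_div_natCast p k
    have : Fact (1 ≤ p / k) := ⟨hpk.out.trans (HolderTriple.le (p / k) p (p / (k + 1 : ℕ)))⟩
    have hpow : ContDiff 𝕜 n (lpPow k : Lp A p μ → Lp A (p / k) μ) := ih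
    have hsucc (f : Lp A p μ) : lpPow (k + 1) f =
        (ContinuousLinearMap.mul 𝕜 A).holderL μ (p / k) p (p / (k + 1 : ℕ)) (lpPow k f) f :=
      lpPow_succ 𝕜 k f
    rw [funext hsucc]
    fun_prop

theorem contDiff_integral_pow [NormedSpace ℝ A] [SMulCommClass ℝ 𝕜 A] [CompleteSpace A]
    [hp_one : Fact (1 ≤ p)] {N : ℕ} (hp : p = N) {n : WithTop ℕ∞} :
    ContDiff 𝕜 n fun g : Lp A p μ => ∫ x, g x ^ N ∂μ := by
  obtain ⟨k, rfl⟩ : ∃ k, N = k + 1 :=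
    Nat.exists_eq_add_one.2 (Nat.one_le_cast.1 (hp ▸ hp_one.out))
  have hconj : HolderConjugate (p / k) p := by
    have hself : p / (k + 1 : ℕ) = 1 := by
      rw [hp, ENNReal.div_self (Nat.cast_ne_zero.2 k.succ_ne_zero) (natCast_ne_top _)]
    have htriple := holderTriple_div_natCast p k
    rwa [hself] at htriple
  have : Fact (1 ≤ p / k) := ⟨HolderConjugate.one_le _ p⟩
  have hpairing (g : Lp A p μ) : ∫ x, g x ^ (k + 1) ∂μ =
      (ContinuousLinearMap.mul 𝕜 A).lpPairing μ (p / k) p (lpPow k g) g := by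
    rw [ContinuousLinearMap.lpPairing_eq_integral]
    refine integral_congr_ae ?_
    filter_upwards [coeFn_lpPow k g] with x hx
    rw [hx, ContinuousLinearMap.mul_apply', pow_succ]
  have hpow : ContDiff 𝕜 n (lpPow k : Lp A p μ → Lp A (p / k) μ) := contDiff_lpPow 𝕜 k
  simp only [hpairing]
  fun_prop

end Power

theorem norm_rpow_toReal_eq_integral {α E : Type*} [MeasurableSpace α] {μ : Measure α}
    [NormedAddCommGroup E] {p : ℝ≥0∞} (hp_zero : p ≠ 0) (hp_top : p ≠ ∞) (f : Lp E p μ) :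
    ‖f‖ ^ p.toReal = ∫ x, ‖f x‖ ^ p.toReal ∂μ := by
  have hnonneg : 0 ≤ ∫ x, ‖f x‖ ^ p.toReal ∂μ := integral_nonneg fun x => by positivity
  rw [Lp.norm_def, (Lp.memLp f).eLpNorm_eq_integral_rpow_norm hp_zero hp_top,
    toReal_ofReal (by positivity), Real.rpow_inv_rpow hnonneg (toReal_ne_zero.2 ⟨hp_zero, hp_top⟩)]

theorem norm_pow_two_mul_eq_integral_inner_pow {α E : Type*} [MeasurableSpace α]
    {μ : Measure α} [NormedAddCommGroup E] [InnerProductSpace ℝ E] {m : ℕ} (hm : m ≠ 0)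
    (f : Lp E (2 * m : ℝ≥0∞) μ) :
    ‖f‖ ^ (2 * m) = ∫ x, inner ℝ (f x) (f x) ^ m ∂μ := by
  have htoReal : (2 * m : ℝ≥0∞).toReal = (2 * m : ℕ) := by simp
  have hnorm := norm_rpow_toReal_eq_integral (by simpa using hm) (by finiteness) f
  simp only [htoReal, Real.rpow_natCast] at hnorm
  simpa only [real_inner_self_eq_norm_sq, ← pow_mul] using hnorm

theorem stmt_2_general {α E : Type*} [MeasurableSpace α] (μ : Measure α) [NormedAddCommGroup E]
    [InnerProductSpace ℝ E] (m : ℕ) [hm : Fact (1 ≤ (2 * m : ℝ≥0∞))] {n : WithTop ℕ∞} :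
    ContDiff ℝ n fun f : Lp E (2 * m : ℝ≥0∞) μ => ‖f‖ ^ (2 * m) := by
  have hm_zero : m ≠ 0 := by
    rintro rfl
    simpa using hm.out
  have : Fact (1 ≤ (m : ℝ≥0∞)) := ⟨Nat.one_le_cast.2 (Nat.one_le_iff_ne_zero.2 hm_zero)⟩
  have := holderTriple_two_mul m
  let innerL := (innerSL ℝ (E := E)).holderL μ (2 * m) (2 * m) m
  have hnorm (f : Lp E (2 * m : ℝ≥0∞) μ) : ‖f‖ ^ (2 * m) = ∫ x, innerL f f x ^ m ∂μ := by
    rw [norm_pow_two_mul_eq_integral_inner_pow hm_zero]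
    refine integral_congr_ae ?_
    filter_upwards [(innerSL ℝ).coeFn_holder (r := (m : ℝ≥0∞)) f f] with x hx
    rw [ContinuousLinearMap.holderL_apply_apply, hx, innerSL_apply_apply]
  have hsquare : ContDiff ℝ n fun f => innerL f f := by fun_prop
  simp only [hnorm]
  exact (contDiff_integral_pow ℝ rfl).comp hsquare

/-- For `p = 2m` a positive even integer, the map `f ↦ ‖f‖_{Lᵖ}^p`
is `C^∞` on `Lᵖ(μ; ℝ)`. -/
theorem stmt_2 {α : Type*} [MeasurableSpace α] (μ : Measure α)
    (m : ℕ) (hm : 1 ≤ m) [Fact (1 ≤ (2 * m : ℝ≥0∞))] :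
    ContDiff ℝ (⊤ : ℕ∞) (fun f : Lp ℝ (2 * m : ℝ≥0∞) μ => ‖f‖ ^ (2 * m)) :=
  stmt_2_general μ m
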